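/- (Generalized Edwards theorem.) In the Edwards setting, let g : X → (−∞, +∞] be lower semicontinuous and bounded from below. Then for every x ∈ X with S_x(−𝟙) > −∞ one has S_x(g) = I_x(g), and moreover S_x(g) = inf{ ∫ g dμ : μ ∈ C_x^F }, i.e. it suffices to take the infimum over measures in C_x^F. -/

import Mathlib

open MeasureTheory Filter Set
open scoped ENNReal

noncomputable section

/-- The nonnegative part of an extended real, as an element of `ℝ≥0∞`. -/
def erealToENNReal (x : EReal) : ℝ≥0∞ := if x = ⊤ then ⊤ else ENNReal.ofReal x.toReal

/-- The integral of an `EReal`-valued function: upper Lebesgue integral of the positive part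
minus that of the negative part. -/
def erealIntegral {α : Type*} [MeasurableSpace α] (μ : Measure α) (f : α → EReal) : EReal :=
  ((∫⁻ a, erealToENNReal (f a) ∂μ : ℝ≥0∞) : EReal) -
    ((∫⁻ a, erealToENNReal (-(f a)) ∂μ : ℝ≥0∞) : EReal)

/-- The Edwards setting: `F` is a cone of upper bounded, upper semicontinuous functions on `X`
with values in `[-∞, ∞)` (not necessarily containing the zero function). -/
def IsEdwardsCone {X : Type*} [TopologicalSpace X] (F : Set (X → EReal)) : Prop :=
  (∀ u ∈ F, UpperSemicontinuous u) ∧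
  (∀ u ∈ F, ∃ K : ℝ, ∀ x, u x ≤ (K : EReal)) ∧
  (∀ u ∈ F, ∀ c : ℝ, 0 < c → (fun x => (c : EReal) * u x) ∈ F) ∧
  (∀ u ∈ F, ∀ v ∈ F, (fun x => u x + v x) ∈ F)

/-- `M_x^F`: the positive (Borel) measures `μ` on `X` with `u(x) ≤ ∫ u dμ` for all `u ∈ F`. -/
def edwardsM {X : Type*} [MeasurableSpace X] (F : Set (X → EReal)) (x : X) :
    Set (Measure X) :=
  { μ | ∀ u ∈ F, u x ≤ erealIntegral μ u }

/-- `S_x(g) = sup { u(x) : u ∈ F, u ≤ g }` (`= -∞`, i.e. `sSup ∅`, if no `u ∈ F` satisfies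
`u ≤ g`). -/
def edwardsS {X : Type*} (F : Set (X → EReal)) (x : X) (g : X → EReal) : EReal :=
  sSup { t : EReal | ∃ u ∈ F, (∀ y, u y ≤ g y) ∧ t = u x }

/-- `I_x(g) = inf { ∫ g dμ : μ ∈ M_x^F }`. -/
def edwardsI {X : Type*} [MeasurableSpace X] (F : Set (X → EReal)) (x : X)
    (g : X → EReal) : EReal :=
  sInf { t : EReal | ∃ μ ∈ edwardsM F x, t = erealIntegral μ g }

/-- `C_x^F = { μ ∈ M_x^F : μ(X) ≤ -S_x(-𝟙) }`. -/
def edwardsC {X : Type*} [MeasurableSpace X] (F : Set (X → EReal)) (x : X) :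
    Set (Measure X) :=
  { μ | μ ∈ edwardsM F x ∧
      ((μ Set.univ : ℝ≥0∞) : EReal) ≤ -(edwardsS F x (fun _ => (-1 : EReal))) }

open scoped Topology CompactlySupported

section Integral

variable {α : Type*} [MeasurableSpace α] {μ : Measure α}

theorem erealToENNReal_eq_toENNReal : erealToENNReal = EReal.toENNReal := rfl

theorem erealIntegral_mono {f g : α → EReal} (h : ∀ a, f a ≤ g a) :
    erealIntegral μ f ≤ erealIntegral μ g := by
  simp only [erealIntegral, erealToENNReal_eq_toENNReal]
  refine EReal.sub_le_sub ?_ ?_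
  · exact EReal.coe_ennreal_le_coe_ennreal_iff.2
      (lintegral_mono fun a => EReal.toENNReal_le_toENNReal (h a))
  · exact EReal.coe_ennreal_le_coe_ennreal_iff.2
      (lintegral_mono fun a => EReal.toENNReal_le_toENNReal (EReal.neg_le_neg_iff.2 (h a)))

theorem erealIntegral_coe {f : α → ℝ} (hf : Integrable f μ) :
    erealIntegral μ (fun a => (f a : EReal)) = ((∫ a, f a ∂μ : ℝ) : EReal) := by
  have hpos : ∫⁻ a, ENNReal.ofReal (f a) ∂μ ≠ ⊤ := hf.lintegral_lt_top.ne
  have hneg : ∫⁻ a, ENNReal.ofReal (-f a) ∂μ ≠ ⊤ := hf.neg.lintegral_lt_top.ne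
  rw [integral_eq_lintegral_pos_part_sub_lintegral_neg_part hf]
  simp only [erealIntegral, erealToENNReal_eq_toENNReal, ← EReal.coe_neg,
    EReal.real_coe_toENNReal, EReal.coe_sub]
  rw [← EReal.coe_ennreal_toReal hpos, ← EReal.coe_ennreal_toReal hneg]

theorem lintegral_toENNReal_neg_ne_top [IsFiniteMeasure μ] {g : α → EReal} {K : ℝ}
    (hg : ∀ a, (K : EReal) ≤ g a) : ∫⁻ a, (-g a).toENNReal ∂μ ≠ ⊤ := by
  have hle : ∫⁻ a, (-g a).toENNReal ∂μ ≤ ∫⁻ _, ENNReal.ofReal (-K) ∂μ := by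
    refine lintegral_mono fun a => ?_
    rw [← EReal.real_coe_toENNReal, EReal.coe_neg]
    exact EReal.toENNReal_le_toENNReal (EReal.neg_le_neg_iff.2 (hg a))
  refine (hle.trans_lt ?_).ne
  rw [lintegral_const]
  exact ENNReal.mul_lt_top ENNReal.ofReal_lt_top (measure_lt_top μ _)

theorem erealIntegral_neg [IsFiniteMeasure μ] {g : α → EReal} {K : ℝ}
    (hg : ∀ a, (K : EReal) ≤ g a) :
    erealIntegral μ (fun a => -g a) = -erealIntegral μ g := by
  have hfin := lintegral_toENNReal_neg_ne_top (μ := μ) hg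
  simp only [erealIntegral, erealToENNReal_eq_toENNReal, neg_neg]
  rw [EReal.neg_sub (Or.inl (EReal.coe_ennreal_ne_bot _))
    (Or.inr (by simpa using hfin)), sub_eq_add_neg, add_comm]

/-- Monotone convergence for `erealIntegral` along integrable real functions. -/
theorem tendsto_integral_erealIntegral [IsFiniteMeasure μ] {g : α → EReal} {f : ℕ → α → ℝ}
    (hf : ∀ n, Integrable (f n) μ) (hmeas : ∀ n, Measurable (f n)) (hmono : Monotone f)
    (hlim : ∀ a, Tendsto (fun n => (f n a : EReal)) atTop (𝓝 (g a))) :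
    Tendsto (fun n => ((∫ a, f n a ∂μ : ℝ) : EReal)) atTop (𝓝 (erealIntegral μ g)) := by
  have hneg0 : ∫⁻ a, (-(f 0 a : EReal)).toENNReal ∂μ ≠ ⊤ := (hf 0).neg.lintegral_lt_top.ne
  have hle : ∀ n a, (f n a : EReal) ≤ g a := fun n a =>
    Monotone.ge_of_tendsto (fun i j hij => EReal.coe_le_coe_iff.2 (hmono hij a)) (hlim a) n
  have hneg : ∫⁻ a, (-g a).toENNReal ∂μ ≠ ⊤ :=
    ((lintegral_mono fun a => EReal.toENNReal_le_toENNReal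
      (EReal.neg_le_neg_iff.2 (hle 0 a))).trans_lt hneg0.lt_top).ne
  have hpos_tendsto : Tendsto (fun n => ∫⁻ a, (f n a : EReal).toENNReal ∂μ) atTop
      (𝓝 (∫⁻ a, (g a).toENNReal ∂μ)) := by
    refine lintegral_tendsto_of_tendsto_of_monotone
      (fun n => (hmeas n).coe_real_ereal.ereal_toENNReal.aemeasurable)
      (Eventually.of_forall fun a i j hij => ?_) (Eventually.of_forall fun a => ?_)
    · exact EReal.toENNReal_le_toENNReal (EReal.coe_le_coe_iff.2 (hmono hij a))
    · exact (EReal.continuous_toENNReal.tendsto _).comp (hlim a)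
  have hneg_tendsto : Tendsto (fun n => ∫⁻ a, (-(f n a : EReal)).toENNReal ∂μ) atTop
      (𝓝 (∫⁻ a, (-g a).toENNReal ∂μ)) := by
    refine lintegral_tendsto_of_tendsto_of_antitone
      (fun n => (hmeas n).neg.coe_real_ereal.ereal_toENNReal.aemeasurable)
      (Eventually.of_forall fun a i j hij => ?_) hneg0 (Eventually.of_forall fun a => ?_)
    · exact EReal.toENNReal_le_toENNReal
        (EReal.neg_le_neg_iff.2 (EReal.coe_le_coe_iff.2 (hmono hij a)))
    · exact (EReal.continuous_toENNReal.tendsto _).comp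
        ((continuous_neg.tendsto _).comp (hlim a))
  simp_rw [← fun n => erealIntegral_coe (hf n)]
  simp only [erealIntegral, erealToENNReal_eq_toENNReal, sub_eq_add_neg]
  have hadd := EReal.continuousAt_add
    (p := (((∫⁻ a, (g a).toENNReal ∂μ : ℝ≥0∞) : EReal),
      -((∫⁻ a, (-g a).toENNReal ∂μ : ℝ≥0∞) : EReal)))
    (Or.inr (by simpa using hneg)) (Or.inl (EReal.coe_ennreal_ne_bot _))
  exact hadd.tendsto.comp
    (((continuous_coe_ennreal_ereal.tendsto _).comp hpos_tendsto).prodMk_nhds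
      ((continuous_neg.tendsto _).comp
        ((continuous_coe_ennreal_ereal.tendsto _).comp hneg_tendsto)))

end Integral

/-- A lower semicontinuous function bounded from below on a metric space is the pointwise limit
of an increasing sequence of continuous real functions. -/
theorem LowerSemicontinuous.exists_monotone_continuous_tendsto {X : Type*} [PseudoMetricSpace X]
    {g : X → EReal} (hg : LowerSemicontinuous g) {K : ℝ} (hK : ∀ y, (K : EReal) ≤ g y) :
    ∃ f : ℕ → X → ℝ, (∀ n, Continuous (f n)) ∧ Monotone f ∧ (∀ n y, (f n y : EReal) ≤ g y) ∧
      ∀ y, Tendsto (fun n => (f n y : EReal)) atTop (𝓝 (g y)) := by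
  set h : ℕ → X → ℝ := fun n z => (min (g z) ((n : ℝ) : EReal)).toReal
  have hcoe : ∀ n z, (h n z : EReal) = min (g z) ((n : ℝ) : EReal) := fun n z =>
    EReal.coe_toReal (ne_top_of_le_ne_top (EReal.coe_ne_top _) (min_le_right _ _))
      (ne_bot_of_le_ne_bot (EReal.coe_ne_bot (min K n))
        (le_min ((EReal.coe_le_coe_iff.2 (min_le_left _ _)).trans (hK z))
          (EReal.coe_le_coe_iff.2 (min_le_right _ _))))
  have hlow : ∀ n z, min K 0 ≤ h n z := fun n z => by
    rw [← EReal.coe_le_coe_iff, hcoe]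
    exact le_min ((EReal.coe_le_coe_iff.2 (min_le_left _ _)).trans (hK z))
      (EReal.coe_le_coe_iff.2 ((min_le_right _ _).trans n.cast_nonneg))
  have hmono : ∀ {m n : ℕ}, m ≤ n → ∀ z, h m z ≤ h n z := fun {m n} hmn z => by
    rw [← EReal.coe_le_coe_iff, hcoe, hcoe]
    exact min_le_min le_rfl (EReal.coe_le_coe_iff.2 (Nat.cast_le.2 hmn))
  have hbdd : ∀ n y, BddBelow (range fun z => h n z + n * dist y z) := fun n y =>
    ⟨min K 0, by
      rintro _ ⟨z, rfl⟩
      have := hlow n z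
      have : 0 ≤ (n : ℝ) * dist y z := by positivity
      simp only
      linarith⟩
  have hle : ∀ n y, ((⨅ z, h n z + n * dist y z : ℝ) : EReal) ≤ g y := fun n y => by
    have h1 : (⨅ z, h n z + n * dist y z) ≤ h n y := by
      simpa using ciInf_le (hbdd n y) y
    refine (EReal.coe_le_coe_iff.2 h1).trans ?_
    rw [hcoe]
    exact min_le_left _ _
  refine ⟨fun n y => ⨅ z, h n z + n * dist y z, fun n => ?_, fun m n hmn y => ?_, hle,
    fun y => tendsto_order.2 ⟨fun a ha => ?_, fun a ha => ?_⟩⟩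
  · refine (LipschitzWith.of_le_add_mul n fun y y' => ?_).continuous
    have : Nonempty X := ⟨y⟩
    rw [← sub_le_iff_le_add]
    refine le_ciInf fun z => ?_
    have h1 := ciInf_le (hbdd n y) z
    have h2 : (n : ℝ) * dist y z ≤ n * (dist y y' + dist y' z) := by
      gcongr
      exact dist_triangle _ _ _
    simp only [NNReal.coe_natCast] at h1 h2 ⊢
    linarith
  · refine ciInf_mono (hbdd m y) fun z => ?_
    have := hmono hmn z
    gcongr
  · obtain ⟨b, hab, hb⟩ := EReal.lt_iff_exists_real_btwn.1 ha
    obtain ⟨δ, hδ, hball⟩ := Metric.eventually_nhds_iff.1 (hg y b hb)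
    have : Nonempty X := ⟨y⟩
    filter_upwards [eventually_ge_atTop ⌈b⌉₊, eventually_ge_atTop ⌈(b - min K 0) / δ⌉₊]
      with n hn hnδ
    refine hab.trans_le (EReal.coe_le_coe_iff.2 (le_ciInf fun z => ?_))
    have hn' : b ≤ n := Nat.ceil_le.1 hn
    have hnδ' : b - min K 0 ≤ n * δ := (div_le_iff₀ hδ).1 (Nat.ceil_le.1 hnδ)
    rcases lt_or_ge (dist z y) δ with hz | hz
    · have h1 : b ≤ h n z := by
        rw [← EReal.coe_le_coe_iff, hcoe]
        exact le_min (hball hz).le (EReal.coe_le_coe_iff.2 hn')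
      have : 0 ≤ (n : ℝ) * dist y z := by positivity
      linarith
    · have h1 := hlow n z
      rw [dist_comm] at hz
      have : (n : ℝ) * δ ≤ n * dist y z := by gcongr
      linarith
  · exact Eventually.of_forall fun n => (hle n y).trans_lt ha

section Cone

variable {X : Type*} {F : Set (X → EReal)} {x : X}

theorem le_edwardsS {u g : X → EReal} (hu : u ∈ F) (hug : ∀ y, u y ≤ g y) :
    u x ≤ edwardsS F x g :=
  le_sSup ⟨u, hu, hug, rfl⟩

/-- If `S_x(-𝟙) > -∞`, then for every constant `N` the cone contains a function below `-N`
that is finite at `x`. -/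
theorem exists_mem_le_const_of_bot_lt_edwardsS
    (hsmul : ∀ u ∈ F, ∀ c : ℝ, 0 < c → (fun y => (c : EReal) * u y) ∈ F)
    (hx : ⊥ < edwardsS F x (fun _ => (-1 : EReal))) :
    ∃ b : ℝ, ∀ c : ℝ, 0 < c → ∃ u ∈ F, (∀ y, u y ≤ ((-c : ℝ) : EReal)) ∧
      ((c * b : ℝ) : EReal) ≤ u x := by
  obtain ⟨_, ⟨w, hwF, hw, rfl⟩, hwx⟩ := lt_sSup_iff.1 hx
  obtain ⟨b, -, hb⟩ := EReal.lt_iff_exists_real_btwn.1 hwx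
  refine ⟨b, fun c hc => ⟨_, hsmul w hwF c hc, fun y => ?_, ?_⟩⟩
  · have := mul_le_mul_of_nonneg_left (hw y) (EReal.coe_nonneg.2 hc.le)
    refine this.trans_eq ?_
    rw [mul_neg, mul_one, EReal.coe_neg]
  · rw [EReal.coe_mul]
    exact mul_le_mul_of_nonneg_left hb.le (EReal.coe_nonneg.2 hc.le)

variable [TopologicalSpace X]

/-- The cone of pairs `(φ, r)` on which the functional separating at level `s` must be
nonnegative. -/
def edwardsPairCone (F : Set (X → EReal)) (hF : IsEdwardsCone F) (g : X → EReal) (x : X) (s : ℝ)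
    (hsmall : ∀ ε : ℝ, 0 < ε → ∃ u ∈ F, (∀ y, u y ≤ 0) ∧ ((-ε : ℝ) : EReal) ≤ u x) :
    PointedCone ℝ (C_c(X, ℝ) × ℝ) where
  carrier := { p | ∃ t : ℝ, 0 ≤ t ∧ ∀ ε : ℝ, 0 < ε → ∃ u ∈ F,
    (∀ y, u y ≤ (p.1 y : EReal) + (t : EReal) * g y) ∧
      ((t * s - p.2 - ε : ℝ) : EReal) ≤ u x }
  zero_mem' := ⟨0, le_rfl, fun ε hε => by simpa using hsmall ε hε⟩
  add_mem' := by
    rintro ⟨φ, r⟩ ⟨ψ, q⟩ ⟨t, ht, h⟩ ⟨t', ht', h'⟩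
    refine ⟨t + t', add_nonneg ht ht', fun ε hε => ?_⟩
    obtain ⟨u, hu, hule, hux⟩ := h (ε / 2) (half_pos hε)
    obtain ⟨v, hv, hvle, hvx⟩ := h' (ε / 2) (half_pos hε)
    refine ⟨_, hF.2.2.2 u hu v hv, fun y => (add_le_add (hule y) (hvle y)).trans_eq ?_, ?_⟩
    · rw [EReal.coe_add, EReal.right_distrib_of_nonneg (EReal.coe_nonneg.2 ht)
        (EReal.coe_nonneg.2 ht'), add_add_add_comm, ← EReal.coe_add]
      rfl
    · refine le_trans (le_of_eq ?_) (add_le_add hux hvx)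
      rw [← EReal.coe_add]
      congr 1
      simp only [Prod.mk_add_mk]
      ring
  smul_mem' := by
    rintro ⟨c, hc⟩ ⟨φ, r⟩ ⟨t, ht, h⟩
    rcases hc.eq_or_lt with rfl | hc'
    · exact ⟨0, le_rfl, fun ε hε => by simpa using hsmall ε hε⟩
    · refine ⟨c * t, mul_nonneg hc ht, fun ε hε => ?_⟩
      obtain ⟨u, hu, hule, hux⟩ := h (ε / c) (div_pos hε hc')
      refine ⟨_, hF.2.2.1 u hu c hc', fun y => (mul_le_mul_of_nonneg_left (hule y)
        (EReal.coe_nonneg.2 hc)).trans_eq ?_, le_trans (le_of_eq ?_)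
        (mul_le_mul_of_nonneg_left hux (EReal.coe_nonneg.2 hc))⟩
      · rw [EReal.left_distrib_of_nonneg_of_ne_top (EReal.coe_nonneg.2 hc) (EReal.coe_ne_top _),
          ← mul_assoc, ← EReal.coe_mul, ← EReal.coe_mul]
        rfl
      · rw [← EReal.coe_mul]
        congr 1
        change c * t * s - c * r - ε = _
        field_simp

/-- Hahn–Banach step: a positive functional dominating the cone `F` at `x` and bounded by `s`
on the continuous minorants of `g`. -/
theorem exists_positiveLinearMap_of_edwardsS_le [CompactSpace X] (hF : IsEdwardsCone F)
    {g : X → EReal} (hx : ⊥ < edwardsS F x (fun _ => (-1 : EReal))) {s : ℝ}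
    (hs : edwardsS F x g ≤ (s : EReal)) :
    ∃ Λ : C_c(X, ℝ) →ₚ[ℝ] ℝ,
      (∀ u ∈ F, ∀ (φ : C_c(X, ℝ)) (a : ℝ), (∀ y, u y ≤ (φ y : EReal)) →
        (a : EReal) ≤ u x → a ≤ Λ φ) ∧
      ∀ φ : C_c(X, ℝ), (∀ y, (φ y : EReal) ≤ g y) → Λ φ ≤ s := by
  obtain ⟨b, hb⟩ := exists_mem_le_const_of_bot_lt_edwardsS hF.2.2.1 hx
  have hsmall : ∀ ε : ℝ, 0 < ε → ∃ u ∈ F, (∀ y, u y ≤ 0) ∧ ((-ε : ℝ) : EReal) ≤ u x := by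
    intro ε hε
    have hc : 0 < ε / (|b| + 1) := by positivity
    obtain ⟨u, hu, hule, hux⟩ := hb _ hc
    refine ⟨u, hu, fun y => (hule y).trans ?_, le_trans (EReal.coe_le_coe_iff.2 ?_) hux⟩
    · rw [← EReal.coe_zero, EReal.coe_le_coe_iff]
      linarith
    · rw [div_mul_eq_mul_div, le_div_iff₀ (by positivity)]
      nlinarith [neg_abs_le b]
  let C := edwardsPairCone F hF g x s hsmall
  let f : (C_c(X, ℝ) × ℝ) →ₗ.[ℝ] ℝ :=
    ⟨(⊥ : Submodule ℝ C_c(X, ℝ)).prod ⊤, (LinearMap.snd ℝ C_c(X, ℝ) ℝ).domRestrict _⟩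
  obtain ⟨G, hGf, hGC⟩ := riesz_extension C f (by
    rintro ⟨⟨φ, r⟩, hφ, _⟩ ⟨t, ht, h⟩
    have hφ0 : φ = 0 := hφ
    simp only [hφ0] at h
    change 0 ≤ r
    refine le_of_forall_pos_le_add fun ε hε => ?_
    obtain ⟨u, hu, hule, hux⟩ := h ε hε
    have hut : u x ≤ ((t * s : ℝ) : EReal) := by
      rcases ht.eq_or_lt with rfl | ht'
      · simpa using hule x
      · have hmem := hF.2.2.1 u hu t⁻¹ (inv_pos.2 ht')
        have hinv : ((t⁻¹ : ℝ) : EReal) * (t : EReal) = 1 := by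
          rw [← EReal.coe_mul, inv_mul_cancel₀ ht'.ne', EReal.coe_one]
        have hle : ((t⁻¹ : ℝ) : EReal) * u x ≤ s := by
          refine (le_edwardsS hmem fun y => ?_).trans hs
          refine (mul_le_mul_of_nonneg_left (hule y)
            (EReal.coe_nonneg.2 (inv_nonneg.2 ht))).trans_eq ?_
          simp [← mul_assoc, hinv]
        have := mul_le_mul_of_nonneg_left hle (EReal.coe_nonneg.2 ht)
        rwa [← mul_assoc, mul_comm (t : EReal), hinv, one_mul, ← EReal.coe_mul] at this
    have := EReal.coe_le_coe_iff.1 (hux.trans hut)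
    linarith) (by
    rintro ⟨φ, r⟩
    obtain ⟨m, hm⟩ := (isCompact_range φ.continuous).bddBelow
    obtain ⟨u, hu, hule, hux⟩ := hb (|m| + 1) (by positivity)
    refine ⟨⟨(0, -r - (|m| + 1) * b), rfl, trivial⟩, 0, le_rfl, fun ε hε => ⟨u, hu, fun y => ?_,
      le_trans (EReal.coe_le_coe_iff.2 ?_) hux⟩⟩
    · refine (hule y).trans ?_
      have : m ≤ φ y := hm ⟨y, rfl⟩
      simp only [Prod.mk_add_mk, zero_add, EReal.coe_zero, zero_mul, add_zero,
        EReal.coe_le_coe_iff]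
      linarith [neg_abs_le m]
    · simp only [Prod.mk_add_mk]
      linarith)
  have hG : ∀ φ r, G (φ, r) = G (φ, 0) + r := fun φ r => by
    have h1 : G (0, r) = r := hGf ⟨(0, r), rfl, trivial⟩
    rw [← congrArg (G (φ, 0) + ·) h1, ← map_add]
    simp
  refine ⟨PositiveLinearMap.mk₀ (G.comp (LinearMap.inl ℝ C_c(X, ℝ) ℝ)) fun φ hφ => ?_,
    fun u hu φ a hle ha => ?_, fun φ hφ => ?_⟩
  · refine hGC _ ⟨0, le_rfl, fun ε hε => ?_⟩
    obtain ⟨u, hu, hule, hux⟩ := hsmall ε hε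
    refine ⟨u, hu, fun y => (hule y).trans ?_, by simpa using hux⟩
    simpa using hφ y
  · have h1 : 0 ≤ G (φ, -a) := hGC _ ⟨0, le_rfl, fun ε hε =>
      ⟨u, hu, by simpa using hle, le_trans (EReal.coe_le_coe_iff.2 (by simp only; linarith)) ha⟩⟩
    rw [hG] at h1
    change a ≤ G (φ, 0)
    linarith
  · have h1 : 0 ≤ G (-φ, s) := hGC _ ⟨1, zero_le_one, fun ε hε => by
      obtain ⟨u, hu, hule, hux⟩ := hsmall ε hε
      refine ⟨u, hu, fun y => (hule y).trans ?_, by simpa using hux⟩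
      have := add_le_add_right (hφ y) (-(φ y : EReal))
      rw [← EReal.coe_neg, ← EReal.coe_add, neg_add_cancel] at this
      simpa using this⟩
    have h2 : G (-φ, 0) = -G (φ, 0) := by
      rw [← map_neg]
      simp
    rw [hG, h2] at h1
    change G (φ, 0) ≤ s
    linarith

end Cone

section Duality

variable {X : Type*} [MeasurableSpace X] {F : Set (X → EReal)} {x : X} {g : X → EReal}

theorem edwardsS_le_edwardsI : edwardsS F x g ≤ edwardsI F x g := by
  refine sSup_le ?_
  rintro _ ⟨u, hu, hug, rfl⟩
  refine le_sInf ?_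
  rintro _ ⟨μ, hμ, rfl⟩
  exact (hμ u hu).trans (erealIntegral_mono hug)

theorem edwardsI_le_sInf_edwardsC :
    edwardsI F x g ≤ sInf { t : EReal | ∃ μ ∈ edwardsC F x, t = erealIntegral μ g } :=
  sInf_le_sInf fun _ ⟨μ, hμ, ht⟩ => ⟨μ, hμ.1, ht⟩

variable [MetricSpace X] [CompactSpace X] [BorelSpace X]

theorem exists_mem_edwardsC_erealIntegral_le (hF : IsEdwardsCone F) (hg : LowerSemicontinuous g)
    {K : ℝ} (hK : ∀ y, (K : EReal) ≤ g y)
    (hx : ⊥ < edwardsS F x (fun _ => (-1 : EReal))) {s : ℝ}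
    (hs : edwardsS F x g ≤ (s : EReal)) :
    ∃ μ ∈ edwardsC F x, erealIntegral μ g ≤ s := by
  obtain ⟨Λ, hΛF, hΛg⟩ := exists_positiveLinearMap_of_edwardsS_le hF hx hs
  let ofCont (f : X → ℝ) (hf : Continuous f) : C_c(X, ℝ) :=
    ⟨⟨f, hf⟩, HasCompactSupport.of_compactSpace f⟩
  have hintegral : ∀ (f : X → ℝ) (hf : Continuous f),
      ∫ y, f y ∂(RealRMK.rieszMeasure Λ) = Λ (ofCont f hf) :=
    fun f hf => (RealRMK.integral_rieszMeasure Λ (ofCont f hf))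
  have hintegrable : ∀ f : X → ℝ, Continuous f → Integrable f (RealRMK.rieszMeasure Λ) :=
    fun f hf => hf.integrable_of_hasCompactSupport (HasCompactSupport.of_compactSpace f)
  refine ⟨RealRMK.rieszMeasure Λ, ⟨fun u hu => ?_, ?_⟩, ?_⟩
  · obtain ⟨M, hM⟩ := hF.2.1 u hu
    have hM' : ∀ y, ((-M : ℝ) : EReal) ≤ -u y := fun y => by
      rw [EReal.coe_neg]
      exact EReal.neg_le_neg_iff.2 (hM y)
    have hlsc : LowerSemicontinuous fun y => -u y := fun y a ha => by
      filter_upwards [hF.1 u hu y (-a) (EReal.lt_neg_comm.1 ha)] with z hz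
      exact EReal.lt_neg_comm.1 hz
    obtain ⟨f, hf, hfm, hfle, hflim⟩ := hlsc.exists_monotone_continuous_tendsto hM'
    have hlim := tendsto_integral_erealIntegral (μ := RealRMK.rieszMeasure Λ)
      (fun n => hintegrable _ (hf n)) (fun n => (hf n).measurable) hfm hflim
    refine EReal.ge_of_forall_gt_iff_ge.1 fun a ha => ?_
    have hbound : erealIntegral (RealRMK.rieszMeasure Λ) (fun y => -u y) ≤ ((-a : ℝ) : EReal) := by
      refine le_of_tendsto' hlim fun n => EReal.coe_le_coe_iff.2 ?_
      have := hΛF u hu (ofCont (fun y => -f n y) (hf n).neg) a (fun y => ?_) ha.le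
      · rw [← hintegral, integral_neg] at this
        linarith
      · exact EReal.le_neg_of_le_neg (hfle n y)
    have hneg := erealIntegral_neg (μ := RealRMK.rieszMeasure Λ) hM'
    simp only [neg_neg] at hneg
    rw [hneg]
    exact EReal.le_neg_of_le_neg (by simpa using hbound)
  · refine EReal.le_neg_of_le_neg (sSup_le ?_)
    rintro _ ⟨u, hu, hule, rfl⟩
    refine EReal.ge_of_forall_gt_iff_ge.1 fun a ha => ?_
    have := hΛF u hu (ofCont (fun _ => -1) continuous_const) a hule ha.le
    rw [← hintegral] at this
    rw [← EReal.coe_ennreal_toReal (measure_ne_top _ _), ← EReal.coe_neg,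
      EReal.coe_le_coe_iff]
    simpa [Measure.real] using this
  · obtain ⟨f, hf, hfm, hfle, hflim⟩ := hg.exists_monotone_continuous_tendsto hK
    refine le_of_tendsto' (tendsto_integral_erealIntegral
      (fun n => hintegrable _ (hf n)) (fun n => (hf n).measurable) hfm hflim) fun n => ?_
    rw [hintegral _ (hf n)]
    exact EReal.coe_le_coe_iff.2 (hΛg _ (hfle n))

end Duality

/-- Generalized Edwards theorem: for `g : X → (-∞, ∞]` lower semicontinuous and bounded from
below, and any `x ∈ X` with `S_x(-𝟙) > -∞`, one has `S_x(g) = I_x(g)`, and it suffices to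
take the infimum over measures in `C_x^F`. -/
theorem edwards_generalized {X : Type*} [MetricSpace X] [CompactSpace X]
    [MeasurableSpace X] [BorelSpace X] (F : Set (X → EReal)) (hF : IsEdwardsCone F)
    (g : X → EReal) (hg : LowerSemicontinuous g) (hgb : ∃ K : ℝ, ∀ y, (K : EReal) ≤ g y)
    (x : X) (hx : ⊥ < edwardsS F x (fun _ => (-1 : EReal))) :
    edwardsS F x g = edwardsI F x g ∧
    edwardsS F x g = sInf { t : EReal | ∃ μ ∈ edwardsC F x, t = erealIntegral μ g } := by
  obtain ⟨K, hK⟩ := hgb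
  have hCS : sInf { t : EReal | ∃ μ ∈ edwardsC F x, t = erealIntegral μ g } ≤ edwardsS F x g := by
    refine EReal.le_of_forall_lt_iff_le.1 fun s hs => ?_
    obtain ⟨μ, hμ, hle⟩ := exists_mem_edwardsC_erealIntegral_le hF hg hK hx hs.le
    exact sInf_le_of_le ⟨μ, hμ, rfl⟩ hle
  exact ⟨edwardsS_le_edwardsI.antisymm (edwardsI_le_sInf_edwardsC.trans hCS),
    (edwardsS_le_edwardsI.trans edwardsI_le_sInf_edwardsC).antisymm hCS⟩

end
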